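/- Let α, β ∈ (1,2), N_x, N_y ≥ 1, and η_α, η_β > 0. Then the matrix J_{α,β} = η_α (I_{N_y} ⊗ A_α) + η_β (A_β ⊗ I_{N_x}), where A_α is of size N_x×N_x and A_β of size N_y×N_y, is symmetric positive definite. -/

import Mathlib

open Matrix Kronecker

/-- The fourth-order coefficients `s_k^{(γ)}`. -/
noncomputable def sCoef (γ : ℝ) (k : ℤ) : ℝ :=
  ((-1 : ℝ) ^ k * Real.Gamma (γ + 1) /
      (Real.Gamma (γ / 2 - k + 1) * Real.Gamma (γ / 2 + k + 1))) *
    (1 + γ * (γ + 1) * (γ + 2) / (6 * (γ - 2 * k + 2) * (γ + 2 * k + 2)))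

/-- The `N×N` symmetric Toeplitz matrix `A_γ` with `(i,j)` entry `s_{i-j}^{(γ)}`. -/
noncomputable def Amat (γ : ℝ) (N : ℕ) : Matrix (Fin N) (Fin N) ℝ :=
  fun i j => sCoef γ ((i : ℤ) - (j : ℤ))

/-- The second-order coefficients. -/
noncomputable def gCoef (γ : ℝ) (k : ℤ) : ℝ :=
  (-1 : ℝ) ^ k * Real.Gamma (γ + 1) /
      (Real.Gamma (γ / 2 - k + 1) * Real.Gamma (γ / 2 + k + 1))

lemma half_ne {γ : ℝ} (hγ : γ ∈ Set.Ioo (1 : ℝ) 2) (m : ℤ) : γ / 2 + m ≠ 0 := by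
  intro h
  obtain ⟨h1, h2⟩ := hγ
  have h3 : (m : ℝ) < 0 := by linarith
  have h4 : (-1 : ℝ) < m := by linarith
  have h5 : m < 0 := by exact_mod_cast h3
  have h6 : -1 < m := by exact_mod_cast h4
  omega

lemma gCoef_rec {γ : ℝ} (hγ : γ ∈ Set.Ioo (1 : ℝ) 2) (k : ℤ) :
    (γ / 2 + k + 1) * gCoef γ (k + 1) = (k - γ / 2) * gCoef γ k := by
  have e1 : γ / 2 + k + 1 ≠ 0 := by
    have := half_ne hγ (k + 1); push_cast at this; rwa [← add_assoc] at this
  have e2 : γ / 2 - k ≠ 0 := by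
    have := half_ne hγ (-k); push_cast at this; rwa [← sub_eq_add_neg] at this
  have n1 : Real.Gamma (γ / 2 + k + 1) ≠ 0 := by
    apply Real.Gamma_ne_zero
    intro m hm
    apply half_ne hγ (k + 1 + m)
    push_cast; linarith
  have n2 : Real.Gamma (γ / 2 - k) ≠ 0 := by
    apply Real.Gamma_ne_zero
    intro m hm
    apply half_ne hγ (-k + m)
    push_cast; linarith
  unfold gCoef
  push_cast
  rw [show γ / 2 - ((k : ℝ) + 1) + 1 = γ / 2 - k by ring,
    show γ / 2 + ((k : ℝ) + 1) + 1 = (γ / 2 + k + 1) + 1 by ring,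
    Real.Gamma_add_one e1, Real.Gamma_add_one e2, zpow_add_one₀ (by norm_num)]
  generalize Real.Gamma (γ / 2 + k + 1) = A at *
  generalize Real.Gamma (γ / 2 - k) = B at *
  generalize (-1 : ℝ) ^ k = s at *
  rw [show (k : ℝ) - γ / 2 = -(γ / 2 - k) by ring]
  generalize γ / 2 + (k : ℝ) + 1 = u at *
  generalize γ / 2 - (k : ℝ) = w at *
  field_simp

lemma gCoef_neg (γ : ℝ) (k : ℤ) : gCoef γ (-k) = gCoef γ k := by
  unfold gCoef
  have : (-1 : ℝ) ^ (-k) = (-1 : ℝ) ^ k := by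
    rw [_root_.zpow_neg, ← _root_.inv_zpow]; norm_num
  rw [this]
  push_cast
  rw [mul_comm (Real.Gamma (γ / 2 - -k + 1))]
  simp only [sub_neg_eq_add, ← sub_eq_add_neg]

lemma gCoef_zero_pos {γ : ℝ} (hγ : γ ∈ Set.Ioo (1 : ℝ) 2) : 0 < gCoef γ 0 := by
  obtain ⟨h1, h2⟩ := hγ
  unfold gCoef
  have a : 0 < Real.Gamma (γ + 1) := Real.Gamma_pos_of_pos (by linarith)
  have b : 0 < Real.Gamma (γ / 2 + 1) := Real.Gamma_pos_of_pos (by linarith)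
  simp
  positivity

lemma gCoef_succ_neg {γ : ℝ} (hγ : γ ∈ Set.Ioo (1 : ℝ) 2) (n : ℕ) :
    gCoef γ ((n : ℤ) + 1) < 0 := by
  have h1 := hγ.1
  have h2 := hγ.2
  induction n with
  | zero =>
    have r := gCoef_rec hγ 0
    have p := gCoef_zero_pos hγ
    simp only [Int.cast_zero, Nat.cast_zero] at *
    by_contra! h
    have : 0 ≤ (γ / 2 + 0 + 1) * gCoef γ (0 + 1) := mul_nonneg (by linarith) h
    nlinarith
  | succ n ih =>
    have r := gCoef_rec hγ ((n : ℤ) + 1)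
    push_cast at *
    have hn : (0 : ℝ) ≤ n := n.cast_nonneg
    by_contra! h
    have : 0 ≤ (γ / 2 + (n + 1) + 1) * gCoef γ (n + 1 + 1) := mul_nonneg (by linarith) h
    have : ((n : ℝ) + 1 - γ / 2) * gCoef γ (n + 1) < 0 :=
      mul_neg_of_pos_of_neg (by linarith) ih
    linarith

lemma gCoef_neg_of_ne {γ : ℝ} (hγ : γ ∈ Set.Ioo (1 : ℝ) 2) (k : ℤ) (hk : k ≠ 0) :
    gCoef γ k < 0 := by
  rcases lt_or_gt_of_ne hk with h | h
  · rw [← gCoef_neg]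
    have := gCoef_succ_neg hγ (-k - 1).toNat
    rwa [show (((-k - 1).toNat : ℤ) + 1) = -k by omega] at this
  · have := gCoef_succ_neg hγ (k - 1).toNat
    rwa [show (((k - 1).toNat : ℤ) + 1) = k by omega] at this

lemma sCoef_eq {γ : ℝ} (hγ : γ ∈ Set.Ioo (1 : ℝ) 2) (k : ℤ) :
    sCoef γ k = gCoef γ k +
      γ / 24 * (2 * gCoef γ k - gCoef γ (k - 1) - gCoef γ (k + 1)) := by
  have e1 : γ + 2 * k + 2 ≠ 0 := by
    have := half_ne hγ (k + 1); push_cast at this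
    intro h; apply this; linarith
  have e2 : γ - 2 * k + 2 ≠ 0 := by
    have := half_ne hγ (-k + 1); push_cast at this
    intro h; apply this; linarith
  have r1 := gCoef_rec hγ k
  have r2 := gCoef_rec hγ (k - 1)
  rw [sub_add_cancel] at r2
  push_cast at r2
  have q1 : gCoef γ (k + 1) = (2 * k - γ) / (γ + 2 * k + 2) * gCoef γ k := by
    field_simp; linarith
  have q2 : gCoef γ (k - 1) = -(γ + 2 * k) / (γ - 2 * k + 2) * gCoef γ k := by
    field_simp; linarith
  rw [q1, q2]
  change gCoef γ k * _ = _
  field_simp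
  ring

lemma row_tel {γ : ℝ} (hγ : γ ∈ Set.Ioo (1 : ℝ) 2) (i : ℤ) (n : ℕ) :
    γ * ∑ j ∈ Finset.range n, gCoef γ (i - j) =
      (γ / 2 + (i - n + 1)) * gCoef γ (i - n + 1)
        - (γ / 2 + (i + 1)) * gCoef γ (i + 1) := by
  induction n with
  | zero => simp
  | succ n ih =>
    rw [Finset.sum_range_succ, mul_add, ih]
    have r := gCoef_rec hγ (i - n)
    push_cast at *
    rw [show i - ((n : ℤ) + 1) + 1 = i - n by ring]
    linarith

lemma row_pos {γ : ℝ} (hγ : γ ∈ Set.Ioo (1 : ℝ) 2) (n i : ℕ) (hi : i < n) :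
    0 < ∑ j ∈ Finset.range n, gCoef γ ((i : ℤ) - j) := by
  have t := row_tel hγ i n
  have h1 := hγ.1
  have h2 := hγ.2
  have hi0 : (0 : ℝ) ≤ i := i.cast_nonneg
  have a : (γ / 2 + ((i : ℝ) + 1)) * gCoef γ ((i : ℤ) + 1) < 0 :=
    mul_neg_of_pos_of_neg (by linarith) (gCoef_succ_neg hγ i)
  have b : 0 ≤ (γ / 2 + ((i : ℝ) - n + 1)) * gCoef γ ((i : ℤ) - n + 1) := by
    rcases eq_or_ne ((i : ℤ) - n + 1) 0 with h | h
    · have h' : (i : ℝ) - n + 1 = 0 := by exact_mod_cast h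
      rw [h, h']
      exact mul_nonneg (by linarith) (gCoef_zero_pos hγ).le
    · have h3 : (i : ℤ) - n + 1 ≤ -1 := by omega
      have h' : (i : ℝ) - n + 1 ≤ -1 := by exact_mod_cast h3
      exact mul_nonneg_of_nonpos_of_nonpos (by linarith) (gCoef_neg_of_ne hγ _ h).le
  push_cast at t
  have : 0 < γ * ∑ j ∈ Finset.range n, gCoef γ ((i : ℤ) - j) := by linarith
  exact pos_of_mul_pos_right this (by linarith)

lemma quad_lower {γ : ℝ} (hγ : γ ∈ Set.Ioo (1 : ℝ) 2) (n : ℕ) (x : ℕ → ℝ) :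
    ∑ i ∈ Finset.range n, x i ^ 2 * ∑ j ∈ Finset.range n, gCoef γ ((i : ℤ) - j) ≤
    ∑ i ∈ Finset.range n, ∑ j ∈ Finset.range n, x i * x j * gCoef γ ((i : ℤ) - j) := by
  have key : ∑ i ∈ Finset.range n, ∑ j ∈ Finset.range n,
      ((x i ^ 2 + x j ^ 2) / 2) * gCoef γ ((i : ℤ) - j) ≤
    ∑ i ∈ Finset.range n, ∑ j ∈ Finset.range n, x i * x j * gCoef γ ((i : ℤ) - j) := by
    refine Finset.sum_le_sum fun i _ => Finset.sum_le_sum fun j _ => ?_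
    rcases eq_or_ne i j with h | h
    · subst h
      apply le_of_eq; ring
    · have := gCoef_neg_of_ne hγ ((i : ℤ) - j) (by omega)
      nlinarith [sq_nonneg (x i - x j)]
  have sw : ∑ i ∈ Finset.range n, ∑ j ∈ Finset.range n, x j ^ 2 * gCoef γ ((i : ℤ) - j) =
      ∑ i ∈ Finset.range n, ∑ j ∈ Finset.range n, x i ^ 2 * gCoef γ ((i : ℤ) - j) := by
    rw [Finset.sum_comm]
    refine Finset.sum_congr rfl fun i _ => Finset.sum_congr rfl fun j _ => ?_
    rw [← gCoef_neg γ ((j : ℤ) - i), neg_sub]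
  refine le_trans (le_of_eq ?_) key
  simp only [Finset.mul_sum, add_div, add_mul, Finset.sum_add_distrib]
  simp only [div_mul_eq_mul_div, ← Finset.sum_div]
  rw [sw]
  ring

/-- backward difference, with zero extension on the left -/
def bdiff (x : ℕ → ℝ) : ℕ → ℝ
  | 0 => x 0
  | n + 1 => x (n + 1) - x n

lemma sum_bdiff (x F : ℕ → ℝ) (n : ℕ) :
    ∑ i ∈ Finset.range (n + 1), bdiff x i * F i =
      ∑ i ∈ Finset.range n, x i * (F i - F (i + 1)) + x n * F n := by
  induction n with
  | zero => simp [bdiff]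
  | succ n ih =>
    rw [Finset.sum_range_succ, ih, Finset.sum_range_succ _ n]
    simp only [bdiff]
    ring

lemma quad_diff (γ : ℝ) (n : ℕ) (x : ℕ → ℝ) (hx : x n = 0) :
    ∑ i ∈ Finset.range (n + 1), ∑ j ∈ Finset.range (n + 1),
      bdiff x i * bdiff x j * gCoef γ ((i : ℤ) - j) =
    ∑ i ∈ Finset.range n, ∑ j ∈ Finset.range n, x i * x j *
      (2 * gCoef γ ((i : ℤ) - j) - gCoef γ ((i : ℤ) - j - 1) - gCoef γ ((i : ℤ) - j + 1)) := by
  simp only [mul_assoc, ← Finset.mul_sum]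
  rw [sum_bdiff x (fun i => ∑ j ∈ Finset.range (n + 1), bdiff x j * gCoef γ ((i : ℤ) - j)), hx,
    zero_mul, add_zero]
  refine Finset.sum_congr rfl fun i _ => ?_
  congr 1
  rw [sum_bdiff x (fun j => gCoef γ ((i : ℤ) - j)), sum_bdiff x
    (fun j => gCoef γ (((i + 1 : ℕ) : ℤ) - j)), hx]
  simp only [zero_mul, add_zero]
  rw [← Finset.sum_sub_distrib]
  refine Finset.sum_congr rfl fun j _ => ?_
  push_cast
  rw [show (i : ℤ) - (j + 1) = i - j - 1 by ring, show (i : ℤ) + 1 - j = i - j + 1 by ring,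
    show (i : ℤ) + 1 - (j + 1) = i - j by ring]
  ring

lemma quad_nonneg {γ : ℝ} (hγ : γ ∈ Set.Ioo (1 : ℝ) 2) (n : ℕ) (x : ℕ → ℝ) :
    0 ≤ ∑ i ∈ Finset.range n, ∑ j ∈ Finset.range n, x i * x j * gCoef γ ((i : ℤ) - j) := by
  refine le_trans (Finset.sum_nonneg fun i hi => ?_) (quad_lower hγ n x)
  exact mul_nonneg (sq_nonneg _) (row_pos hγ n i (Finset.mem_range.1 hi)).le

lemma quad_pos {γ : ℝ} (hγ : γ ∈ Set.Ioo (1 : ℝ) 2) (n : ℕ) (x : ℕ → ℝ)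
    (h : ∃ i < n, x i ≠ 0) :
    0 < ∑ i ∈ Finset.range n, ∑ j ∈ Finset.range n, x i * x j * gCoef γ ((i : ℤ) - j) := by
  obtain ⟨i, hi, hxi⟩ := h
  refine lt_of_lt_of_le (Finset.sum_pos' (fun i hi => ?_) ⟨i, Finset.mem_range.2 hi, ?_⟩)
    (quad_lower hγ n x)
  · exact mul_nonneg (sq_nonneg _) (row_pos hγ n i (Finset.mem_range.1 hi)).le
  · exact mul_pos (by positivity) (row_pos hγ n i hi)

lemma squad_pos {γ : ℝ} (hγ : γ ∈ Set.Ioo (1 : ℝ) 2) (n : ℕ) (x : ℕ → ℝ)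
    (hx : x n = 0) (h : ∃ i < n, x i ≠ 0) :
    0 < ∑ i ∈ Finset.range n, ∑ j ∈ Finset.range n, x i * x j * sCoef γ ((i : ℤ) - j) := by
  have a := quad_pos hγ n x h
  have b := quad_nonneg hγ (n + 1) (bdiff x)
  rw [quad_diff γ n x hx] at b
  have e : ∑ i ∈ Finset.range n, ∑ j ∈ Finset.range n, x i * x j * sCoef γ ((i : ℤ) - j) =
      ∑ i ∈ Finset.range n, ∑ j ∈ Finset.range n, x i * x j * gCoef γ ((i : ℤ) - j) +
      γ / 24 * ∑ i ∈ Finset.range n, ∑ j ∈ Finset.range n, x i * x j *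
      (2 * gCoef γ ((i : ℤ) - j) - gCoef γ ((i : ℤ) - j - 1) - gCoef γ ((i : ℤ) - j + 1)) := by
    simp only [Finset.mul_sum, ← Finset.sum_add_distrib]
    refine Finset.sum_congr rfl fun i _ => Finset.sum_congr rfl fun j _ => ?_
    rw [sCoef_eq hγ]
    ring
  rw [e]
  have := hγ.1
  positivity

lemma sCoef_neg {γ : ℝ} (hγ : γ ∈ Set.Ioo (1 : ℝ) 2) (k : ℤ) : sCoef γ (-k) = sCoef γ k := by
  rw [sCoef_eq hγ, sCoef_eq hγ, gCoef_neg, show -k - 1 = -(k + 1) by ring,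
    show -k + 1 = -(k - 1) by ring, gCoef_neg, gCoef_neg]
  ring

lemma Amat_symm {γ : ℝ} (hγ : γ ∈ Set.Ioo (1 : ℝ) 2) (N : ℕ) : (Amat γ N).IsSymm := by
  ext i j
  simp only [Matrix.transpose_apply, Amat]
  rw [← sCoef_neg hγ, neg_sub]

lemma Amat_posDef {γ : ℝ} (hγ : γ ∈ Set.Ioo (1 : ℝ) 2) (N : ℕ) : (Amat γ N).PosDef := by
  refine Matrix.PosDef.of_dotProduct_mulVec_pos ?_ ?_
  · rw [Matrix.IsHermitian, Matrix.conjTranspose_eq_transpose_of_trivial]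
    exact Amat_symm hγ N
  · intro v hv
    let x : ℕ → ℝ := fun i => if h : i < N then v ⟨i, h⟩ else 0
    have hxv : ∀ i : Fin N, x i = v i := fun i => by simp [x]
    have hp := squad_pos hγ N x (by simp [x]) (by
      obtain ⟨i, hi⟩ := Function.ne_iff.1 hv
      exact ⟨i, i.2, by rw [hxv]; exact hi⟩)
    rw [Finset.sum_range] at hp
    simp only [Finset.sum_range, hxv] at hp
    refine lt_of_lt_of_eq hp ?_
    simp only [dotProduct, Matrix.mulVec, Finset.mul_sum, Amat, star_trivial]
    refine Finset.sum_congr rfl fun i _ => Finset.sum_congr rfl fun j _ => ?_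
    ring

theorem stmt_10 (α β : ℝ) (hα : α ∈ Set.Ioo (1 : ℝ) 2) (hβ : β ∈ Set.Ioo (1 : ℝ) 2)
    (Nx Ny : ℕ) (hNx : 1 ≤ Nx) (hNy : 1 ≤ Ny)
    (ηα ηβ : ℝ) (hηα : 0 < ηα) (hηβ : 0 < ηβ) :
    ∀ J : Matrix (Fin Ny × Fin Nx) (Fin Ny × Fin Nx) ℝ,
      J = ηα • ((1 : Matrix (Fin Ny) (Fin Ny) ℝ) ⊗ₖ Amat α Nx) +
            ηβ • (Amat β Ny ⊗ₖ (1 : Matrix (Fin Nx) (Fin Nx) ℝ)) →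
      J.IsSymm ∧ J.PosDef := by
  rintro J rfl
  have P : (ηα • ((1 : Matrix (Fin Ny) (Fin Ny) ℝ) ⊗ₖ Amat α Nx) +
            ηβ • (Amat β Ny ⊗ₖ (1 : Matrix (Fin Nx) (Fin Nx) ℝ))).PosDef :=
    ((Matrix.PosDef.one.kronecker (Amat_posDef hα Nx)).smul hηα).add
      (((Amat_posDef hβ Ny).kronecker Matrix.PosDef.one).smul hηβ)
  refine ⟨?_, P⟩
  have := P.isHermitian
  rwa [Matrix.IsHermitian, Matrix.conjTranspose_eq_transpose_of_trivial] at this
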